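/- Let λ : [t₀,∞) → (0,∞) be differentiable and nondecreasing, let x : [t₀,∞) → H be differentiable, and assume the map t ↦ ∇Φ_{λ(t)}(x(t)) is differentiable at t ≥ t₀. Then ⟨(d/dt)[∇Φ_{λ(t)}(x(t))], ẋ(t)⟩ ≥ −2·(λ'(t)/λ(t))·‖∇Φ_{λ(t)}(x(t))‖·‖ẋ(t)‖. -/

import Mathlib

open Set MeasureTheory Filter Real

noncomputable section

/-- Convexity for extended-real-valued functions. -/
def EConvexOn {H : Type*} [NormedAddCommGroup H] [NormedSpace ℝ H] (f : H → EReal) : Prop :=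
  ∀ x y : H, ∀ a c : ℝ, 0 ≤ a → 0 ≤ c → a + c = 1 →
    f (a • x + c • y) ≤ (a : EReal) * f x + (c : EReal) * f y

/-- `p` is the proximal point of `f` with parameter `l` at `x`, i.e. the (unique) minimizer of
`y ↦ f y + ‖x - y‖² / (2l)`. -/
def IsProxPt {H : Type*} [NormedAddCommGroup H] [InnerProductSpace ℝ H]
    (f : H → EReal) (l : ℝ) (x p : H) : Prop :=
  ∀ y : H, f p + ((‖x - p‖ ^ 2 / (2 * l) : ℝ) : EReal)
      ≤ f y + ((‖x - y‖ ^ 2 / (2 * l) : ℝ) : EReal)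

/-- The Moreau envelope of `f` with parameter `l` (as a real number). -/
def moreau {H : Type*} [NormedAddCommGroup H] [InnerProductSpace ℝ H]
    (f : H → EReal) (l : ℝ) (x : H) : ℝ :=
  (⨅ y : H, f y + ((‖x - y‖ ^ 2 / (2 * l) : ℝ) : EReal)).toReal

/-!
Write `g = λ⁻¹ (x - p)` with `p = prox_{λΦ}(x)`, so that `p = x - λ g` and `g` is a subgradient of
`Φ` at `p`. The subdifferential does not depend on `λ`, so its monotonicity survives a varying `λ`:
increments of `g` and `p` along the curve have nonnegative inner product, and in the limit
`⟪g', x' - λ' g - λ g'⟫ ≥ 0`. If `λ ‖g'‖ ≤ |λ'| ‖g‖`, then Cauchy–Schwarz bounds `⟪g', x'⟫` below by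
`-(|λ'| / λ) ‖g‖ ‖x'‖`; otherwise `⟪g', x'⟫ ≥ ‖g'‖ (λ ‖g'‖ - |λ'| ‖g‖) ≥ 0`.
-/

section

open scoped Topology RealInnerProductSpace

variable {H : Type*} [NormedAddCommGroup H] [InnerProductSpace ℝ H]

/-- `g` is a subgradient of `f` at `p`, i.e. `g ∈ ∂f(p)`. The inequality is read in `EReal`, so
where `f` is `⊥` every vector is a subgradient, and where `f` is `⊤` none is unless `f` is
identically `⊤`. -/
def IsSubgradientAt (f : H → EReal) (g p : H) : Prop :=
  ∀ q : H, f p + (⟪g, q - p⟫ : EReal) ≤ f q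

theorem IsSubgradientAt.ne_top {f : H → EReal} {g p : H} (hg : IsSubgradientAt f g p)
    (hproper : ∃ y, f y ≠ ⊤) : f p ≠ ⊤ := by
  obtain ⟨y, hy⟩ := hproper
  intro hp
  refine hy (top_le_iff.1 ?_)
  simpa only [hp, EReal.top_add_coe] using hg y

theorem IsSubgradientAt.inner_sub_sub_nonneg {f : H → EReal} {g h p q : H}
    (hg : IsSubgradientAt f g p) (hh : IsSubgradientAt f h q) (hbot : f p ≠ ⊥) (htop : f p ≠ ⊤) :
    0 ≤ ⟪h - g, q - p⟫ := by
  have hpq := hg q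
  have hqp := hh p
  have hq_top : f q ≠ ⊤ := hh.ne_top ⟨p, htop⟩
  lift f p to ℝ using ⟨htop, hbot⟩ with a
  have hq_bot : f q ≠ ⊥ := fun hq => by simp [hq] at hpq
  lift f q to ℝ using ⟨hq_top, hq_bot⟩ with b
  norm_cast at hpq hqp
  rw [← neg_sub q p, inner_neg_right] at hqp
  rw [inner_sub_left]
  linarith

/-- The bound comes from comparing `p` with the competitor `(1 - c) p + c q`, after division by
`c`. -/
theorem IsProxPt.sub_add_inner_le {f : H → EReal} (hconv : EConvexOn f) {l : ℝ} {x p q : H}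
    (hp : IsProxPt f l x p) {a b : ℝ} (ha : f p = a) (hb : f q = b) {c : ℝ} (hc : 0 < c)
    (hc1 : c ≤ 1) :
    a - b + ⟪l⁻¹ • (x - p), q - p⟫ ≤ c * (‖q - p‖ ^ 2 / (2 * l)) := by
  have hmin := (hp ((1 - c) • p + c • q)).trans
    (add_le_add_left (hconv p q (1 - c) c (by linarith) hc.le (by ring)) _)
  rw [ha, hb] at hmin
  norm_cast at hmin
  have hsq : ‖x - ((1 - c) • p + c • q)‖ ^ 2
      = ‖x - p‖ ^ 2 - 2 * (c * ⟪x - p, q - p⟫) + c ^ 2 * ‖q - p‖ ^ 2 := by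
    rw [show x - ((1 - c) • p + c • q) = (x - p) - c • (q - p) by module, norm_sub_sq_real,
      real_inner_smul_right, norm_smul, Real.norm_of_nonneg hc.le, mul_pow]
  rw [hsq] at hmin
  rw [real_inner_smul_left]
  refine le_of_mul_le_mul_left ?_ hc
  linear_combination hmin

theorem IsProxPt.isSubgradientAt {f : H → EReal} (hconv : EConvexOn f) {l : ℝ} {x p : H}
    (hp : IsProxPt f l x p) : IsSubgradientAt f (l⁻¹ • (x - p)) p := by
  intro q
  have hpq := hp q
  induction ha : f p with
  | bot => simp
  | top =>
    rw [ha, EReal.top_add_coe, top_le_iff] at hpq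
    induction hb : f q with
    | top => exact le_top
    | bot => simp [hb] at hpq
    | coe b => exact absurd (hb ▸ hpq) (EReal.coe_ne_top _)
  | coe a =>
    induction hb : f q with
    | top => exact le_top
    | bot => simp [ha, hb, ← EReal.coe_add] at hpq
    | coe b =>
      have hlim : Tendsto (fun c : ℝ => c * (‖q - p‖ ^ 2 / (2 * l))) (𝓝[>] 0) (𝓝 0) := by
        have hcont : Continuous fun c : ℝ => c * (‖q - p‖ ^ 2 / (2 * l)) := by fun_prop
        simpa only [zero_mul] using (hcont.tendsto 0).mono_left nhdsWithin_le_nhds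
      have hle : a - b + ⟪l⁻¹ • (x - p), q - p⟫ ≤ 0 := by
        refine ge_of_tendsto hlim ?_
        filter_upwards [Ioc_mem_nhdsGT (zero_lt_one' ℝ)] with c hc
        exact hp.sub_add_inner_le hconv ha hb hc.1 hc.2
      norm_cast
      linarith

theorem inner_nonneg_of_hasDerivWithinAt {g p : ℝ → H} {g' p' : H} {s : Set ℝ} {t : ℝ}
    (ht : AccPt t (𝓟 s)) (hg : HasDerivWithinAt g g' s t) (hp : HasDerivWithinAt p p' s t)
    (hmono : ∀ r ∈ s, 0 ≤ ⟪g r - g t, p r - p t⟫) : 0 ≤ ⟪g', p'⟫ := by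
  have : (𝓝[s \ {t}] t).NeBot := accPt_principal_iff_nhdsWithin.1 ht
  refine ge_of_tendsto ((hasDerivWithinAt_iff_tendsto_slope.1 hg).inner (𝕜 := ℝ)
    (hasDerivWithinAt_iff_tendsto_slope.1 hp)) ?_
  filter_upwards [self_mem_nhdsWithin] with r hr
  rw [slope_def_module, slope_def_module, real_inner_smul_left, real_inner_smul_right, ← mul_assoc]
  exact mul_nonneg (mul_self_nonneg _) (hmono r hr.1)

theorem neg_norm_mul_norm_le_inner_of_inner_sub_nonneg {u v w : H} (h : 0 ≤ ⟪u, v - (w + u)⟫) :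
    -(‖w‖ * ‖v‖) ≤ ⟪u, v⟫ := by
  rcases le_total ‖u‖ ‖w‖ with huw | hwu
  · calc -(‖w‖ * ‖v‖) ≤ -(‖u‖ * ‖v‖) := by gcongr
      _ ≤ ⟪u, v⟫ := neg_le_of_abs_le (abs_real_inner_le_norm u v)
  · calc -(‖w‖ * ‖v‖) ≤ 0 := neg_nonpos.2 (by positivity)
      _ ≤ ‖u‖ * (‖u‖ - ‖w‖) := mul_nonneg (norm_nonneg u) (sub_nonneg.2 hwu)
      _ = ‖u‖ ^ 2 - ‖u‖ * ‖w‖ := by ring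
      _ ≤ ‖u‖ ^ 2 + ⟪u, w⟫ := by linarith [neg_le_of_abs_le (abs_real_inner_le_norm u w)]
      _ ≤ ⟪u, v⟫ := by
        rw [inner_sub_right, inner_add_right, real_inner_self_eq_norm_sq] at h
        linarith

theorem hasDerivWithinAt_of_inv_smul_sub {lam : ℝ → ℝ} {lam' : ℝ} {x p : ℝ → H} {v D : H}
    {s : Set ℝ} {t : ℝ} (ht : t ∈ s) (hlam0 : lam t ≠ 0) (hlam : HasDerivWithinAt lam lam' s t)
    (hx : HasDerivWithinAt x v s t)
    (hD : HasDerivWithinAt (fun r => (lam r)⁻¹ • (x r - p r)) D s t) :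
    HasDerivWithinAt p (v - (lam' • ((lam t)⁻¹ • (x t - p t)) + lam t • D)) s t := by
  have hp_eq : p =ᶠ[𝓝[s] t] fun r => x r - lam r • ((lam r)⁻¹ • (x r - p r)) := by
    filter_upwards [hlam.continuousWithinAt.eventually_ne hlam0] with r hr
    rw [smul_inv_smul₀ hr, sub_sub_cancel]
  rw [add_comm]
  exact (hx.sub (hlam.smul hD)).congr_of_eventuallyEq_of_mem hp_eq ht

theorem moreau_gradient_derivative_inner_lower_bound_general {Φ : H → EReal}
    (hΦbot : ∀ y, Φ y ≠ ⊥) (hΦproper : ∃ y, Φ y ≠ ⊤) (hΦconv : EConvexOn Φ)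
    {lam : ℝ → ℝ} {lam' : ℝ} {x p : ℝ → H} {v D : H} {s : Set ℝ} {t : ℝ}
    (hts : t ∈ s) (ht : AccPt t (𝓟 s)) (hlampos : 0 < lam t)
    (hlam' : HasDerivWithinAt lam lam' s t) (hx : HasDerivWithinAt x v s t)
    (hp : ∀ r ∈ s, IsProxPt Φ (lam r) (x r) (p r))
    (hD : HasDerivWithinAt (fun r => (lam r)⁻¹ • (x r - p r)) D s t) :
    -(|lam'| / lam t * ‖(lam t)⁻¹ • (x t - p t)‖ * ‖v‖) ≤ ⟪D, v⟫ := by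
  have hsub : ∀ r ∈ s, IsSubgradientAt Φ ((lam r)⁻¹ • (x r - p r)) (p r) :=
    fun r hr => (hp r hr).isSubgradientAt hΦconv
  have hmono := inner_nonneg_of_hasDerivWithinAt ht hD
    (hasDerivWithinAt_of_inv_smul_sub hts hlampos.ne' hlam' hx hD) fun r hr =>
      (hsub t hts).inner_sub_sub_nonneg (hsub r hr) (hΦbot _) ((hsub t hts).ne_top hΦproper)
  have hbound := neg_norm_mul_norm_le_inner_of_inner_sub_nonneg (u := lam t • D)
    (by rw [real_inner_smul_left]; exact mul_nonneg hlampos.le hmono)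
  rw [real_inner_smul_left, norm_smul lam', Real.norm_eq_abs] at hbound
  calc -(|lam'| / lam t * ‖(lam t)⁻¹ • (x t - p t)‖ * ‖v‖)
      = -(|lam'| * ‖(lam t)⁻¹ • (x t - p t)‖ * ‖v‖) / lam t := by ring
    _ ≤ ⟪D, v⟫ := by rwa [div_le_iff₀' hlampos]

end

theorem moreau_gradient_derivative_inner_lower_bound
    {H : Type*} [NormedAddCommGroup H] [InnerProductSpace ℝ H] [CompleteSpace H]
    (Φ : H → EReal)
    (hΦbot : ∀ y, Φ y ≠ ⊥) (hΦproper : ∃ y, Φ y ≠ ⊤)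
    (hΦconv : EConvexOn Φ) (hΦlsc : LowerSemicontinuous Φ)
    (hargmin : ∃ z, ∀ y, Φ z ≤ Φ y)
    (t₀ : ℝ) (ht₀ : 0 < t₀)
    (lam lam' : ℝ → ℝ)
    (hlampos : ∀ t ≥ t₀, 0 < lam t)
    (hlam' : ∀ t ≥ t₀, HasDerivAt lam (lam' t) t)
    (hlammono : MonotoneOn lam (Set.Ici t₀))
    (x v p : ℝ → H)
    (hx : ∀ t ≥ t₀, HasDerivAt x (v t) t)
    (hp : ∀ t ≥ t₀, IsProxPt Φ (lam t) (x t) (p t))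
    :
    ∀ t ≥ t₀, ∀ D : H, HasDerivAt (fun s => (lam s)⁻¹ • (x s - p s)) D t →
      (inner ℝ D (v t) : ℝ)
        ≥ -(2 * (lam' t / lam t) * ‖(lam t)⁻¹ • (x t - p t)‖ * ‖v t‖) := by
  intro t ht D hD
  have hacc : AccPt t (𝓟 (Ici t₀)) := uniqueDiffWithinAt_iff_accPt.1 (uniqueDiffOn_Ici t₀ t ht)
  have hlam'_nonneg : 0 ≤ lam' t := (hlam' t ht).hasDerivWithinAt.nonneg_of_monotoneOn hacc hlammono
  have hbound := moreau_gradient_derivative_inner_lower_bound_general hΦbot hΦproper hΦconv ht hacc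
    (hlampos t ht) (hlam' t ht).hasDerivWithinAt (hx t ht).hasDerivWithinAt hp hD.hasDerivWithinAt
  rw [abs_of_nonneg hlam'_nonneg] at hbound
  refine hbound.trans' (neg_le_neg ?_)
  gcongr
  exact le_mul_of_one_le_left (div_nonneg hlam'_nonneg (hlampos t ht).le) one_le_two
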